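/- Let -1 < β < -1/2 ≤ α. Then for all t > 0 and θ, φ ∈ [0,π], 𝓗_t^{α,β}(θ,φ) = ∫_{(-1,1)} ∫_{[-1,1]} (−∂_v Ψ^{α,β}(t,θ,φ,u,v)) dΠ_α(u) Π_β(v) dv + ∫_{[-1,1]} ∫_{[-1,1]} Ψ^{α,β}(t,θ,φ,u,v) dΠ_α(u) dΠ_{-1/2}(v). -/

import Mathlib

open MeasureTheory Real Set
open scoped ENNReal Classical

noncomputable def cab (α β : ℝ) : ℝ :=
  Real.Gamma (α + β + 2) / (2 ^ (α + β + 1) * Real.Gamma (α + 1) * Real.Gamma (β + 1))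

noncomputable def F4 (a₁ a₂ b₁ b₂ x y : ℝ) : ℝ :=
  ∑' p : ℕ × ℕ,
    (Polynomial.eval a₁ (ascPochhammer ℝ (p.1 + p.2)) *
      Polynomial.eval a₂ (ascPochhammer ℝ (p.1 + p.2))) /
    (Polynomial.eval b₁ (ascPochhammer ℝ p.1) * Polynomial.eval b₂ (ascPochhammer ℝ p.2) *
      (Nat.factorial p.1) * (Nat.factorial p.2)) * x ^ p.1 * y ^ p.2

noncomputable def Hker (α β t θ φ : ℝ) : ℝ :=
  cab α β * Real.sinh (t / 2) / Real.cosh (t / 2) ^ (α + β + 2) *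
    F4 ((α + β + 2) / 2) ((α + β + 3) / 2) (α + 1) (β + 1)
      ((Real.sin (θ / 2) * Real.sin (φ / 2) / Real.cosh (t / 2)) ^ 2)
      ((Real.cos (θ / 2) * Real.cos (φ / 2) / Real.cosh (t / 2)) ^ 2)

noncomputable def qf (θ φ u v : ℝ) : ℝ :=
  1 - u * Real.sin (θ / 2) * Real.sin (φ / 2) - v * Real.cos (θ / 2) * Real.cos (φ / 2)

noncomputable def Psi (α β t θ φ u v : ℝ) : ℝ :=
  cab α β * Real.sinh (t / 2) / (Real.cosh (t / 2) - 1 + qf θ φ u v) ^ (α + β + 2)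

noncomputable def PsiE (α β t θ φ u v : ℝ) : ℝ :=
  (Psi α β t θ φ u v + Psi α β t θ φ (-u) v + Psi α β t θ φ u (-v) +
    Psi α β t θ φ (-u) (-v)) / 4

noncomputable def PiMeas (ν : ℝ) : Measure ℝ :=
  if ν = -(1/2) then (2⁻¹ : ℝ≥0∞) • (Measure.dirac (-1) + Measure.dirac 1)
  else (volume.restrict (Icc (-1 : ℝ) 1)).withDensity
    (fun u => ENNReal.ofReal
      (Real.Gamma (ν + 1) / (Real.sqrt π * Real.Gamma (ν + 1/2)) * (1 - u ^ 2) ^ (ν - 1/2)))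

noncomputable def PiFun (γ u : ℝ) : ℝ :=
  Real.Gamma (γ + 1) / (Real.sqrt π * Real.Gamma (γ + 1/2)) *
    ∫ w in (0 : ℝ)..u, (1 - w ^ 2) ^ (γ - 1/2)

noncomputable def PiInt (ν : ℝ) (S : Set ℝ) (f : ℝ → ℝ) : ℝ :=
  if ν = -(1/2) then
    ((if (-1 : ℝ) ∈ S then f (-1) else 0) + (if (1 : ℝ) ∈ S then f 1 else 0)) / 2
  else ∫ u in S, f u *
    (Real.Gamma (ν + 1) / (Real.sqrt π * Real.Gamma (ν + 1/2)) * (1 - u ^ 2) ^ (ν - 1/2))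

noncomputable def muab (α β : ℝ) : Measure ℝ :=
  (volume.restrict (Icc (0 : ℝ) π)).withDensity
    (fun θ => ENNReal.ofReal (Real.sin (θ / 2) ^ (2 * α + 1) * Real.cos (θ / 2) ^ (2 * β + 1)))

def ballI (θ r : ℝ) : Set ℝ := Ioo (θ - r) (θ + r) ∩ Icc 0 π

lemma ascPochhammer_eval_two_mul (a : ℝ) (k : ℕ) :
    (ascPochhammer ℝ (2 * k)).eval a =
      4 ^ k * (ascPochhammer ℝ k).eval (a / 2) * (ascPochhammer ℝ k).eval ((a + 1) / 2) := by
  induction k with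
  | zero => simp
  | succ k ih =>
    rw [show 2 * (k + 1) = 2 * k + 1 + 1 by ring, ascPochhammer_succ_eval, ascPochhammer_succ_eval,
      ascPochhammer_succ_eval, ascPochhammer_succ_eval, ih]
    push_cast
    ring

lemma factorial_two_mul_eq (k : ℕ) :
    ((2 * k).factorial : ℝ) = 4 ^ k * (ascPochhammer ℝ k).eval (1 / 2) * k.factorial := by
  have h := ascPochhammer_eval_two_mul 1 k
  rw [ascPochhammer_eval_one, show ((1 : ℝ) + 1) / 2 = 1 by norm_num, ascPochhammer_eval_one] at h
  exact h

lemma hasSum_one_div_one_sub_rpow (a : ℝ) {z : ℝ} (hz : |z| < 1) :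
    HasSum (fun k : ℕ => (ascPochhammer ℝ k).eval a / k.factorial * z ^ k) (1 / (1 - z) ^ a) := by
  have h := (Real.one_div_one_sub_rpow_hasFPowerSeriesOnBall_zero a).hasSum (y := z)
    (by simpa [Metric.mem_eball, edist_dist, Real.dist_eq] using hz)
  simp only [zero_add] at h
  convert! h using 1
  funext k
  rw [FormalMultilinearSeries.ofScalars_apply_eq, smul_eq_mul]
  congr 1
  have h1 := Ring.factorial_nsmul_multichoose_eq_ascPochhammer a k
  rw [Polynomial.ascPochhammer_smeval_eq_eval] at h1
  rw [← h1, ← Ring.multichoose_eq]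
  have : (k.factorial : ℝ) ≠ 0 := by positivity
  simp [this]

lemma hasSum_deriv_one_div_one_sub_rpow (a : ℝ) {z : ℝ} (hz : |z| < 1) :
    HasSum (fun k : ℕ => (ascPochhammer ℝ k).eval a / k.factorial * (k * z ^ (k - 1)))
      (a / (1 - z) ^ (a + 1)) := by
  have h := (hasSum_one_div_one_sub_rpow (a + 1) hz).mul_left a
  rw [← hasSum_nat_add_iff' 1]
  convert! h using 1
  · funext k
    rw [ascPochhammer_succ_left, Nat.factorial_succ]
    have : (k.factorial : ℝ) ≠ 0 := by positivity
    simp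
    field_simp
  · simp [div_eq_mul_inv]

lemma intervalIntegrable_one_sub_sq_rpow {s : ℝ} (hs : -1 < s) :
    IntervalIntegrable (fun w : ℝ => (1 - w ^ 2) ^ s) volume (-1) 1 := by
  have h := Complex.betaIntegral_convergent (u := ((s + 1 : ℝ) : ℂ)) (v := ((s + 1 : ℝ) : ℂ))
    (by simpa using by linarith) (by simpa using by linarith)
  have h2 : IntervalIntegrable (fun x : ℝ => x ^ s * (1 - x) ^ s) volume 0 1 := by
    rw [intervalIntegrable_iff_integrableOn_Ioo_of_le zero_le_one] at h ⊢
    refine IntegrableOn.congr_fun (f := fun x : ℝ => RCLike.re _) h.re (fun x hx => ?_)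
      measurableSet_Ioo
    have e1 : (x : ℂ) ^ (((s + 1 : ℝ) : ℂ) - 1) = ((x ^ s : ℝ) : ℂ) := by
      rw [Complex.ofReal_cpow hx.1.le]; push_cast; ring_nf
    have e2 : (1 - x : ℂ) ^ (((s + 1 : ℝ) : ℂ) - 1) = (((1 - x) ^ s : ℝ) : ℂ) := by
      rw [Complex.ofReal_cpow (by linarith [hx.2])]; push_cast; ring_nf
    simp only [e1, e2]
    rw [← Complex.ofReal_mul]
    rfl
  have h3 := ((h2.comp_add_right (1 / 2)).comp_mul_left (c := 1 / 2)).const_mul (4 ^ s)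
  norm_num at h3
  rw [intervalIntegrable_iff_integrableOn_Ioo_of_le (by norm_num)] at h3 ⊢
  refine h3.congr_fun (fun x hx => ?_) measurableSet_Ioo
  obtain ⟨hx1, hx2⟩ := hx
  simp only
  rw [← Real.mul_rpow (by linarith) (by linarith), ← Real.mul_rpow (by norm_num) (by nlinarith)]
  congr 1
  ring

lemma integral_one_sub_sq_rpow {ν : ℝ} (hν : -(1 / 2) < ν) :
    ∫ w in (-1 : ℝ)..1, (1 - w ^ 2) ^ (ν - 1 / 2) =
      √π * Real.Gamma (ν + 1 / 2) / Real.Gamma (ν + 1) := by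
  have hb := ProbabilityTheory.beta_eq_betaIntegralReal (ν + 1 / 2) (ν + 1 / 2)
    (by linarith) (by linarith)
  have hb2 : ProbabilityTheory.beta (ν + 1 / 2) (ν + 1 / 2) =
      ∫ x in (0 : ℝ)..1, x ^ (ν - 1 / 2) * (1 - x) ^ (ν - 1 / 2) := by
    have : Complex.betaIntegral ((ν + 1 / 2 : ℝ) : ℂ) ((ν + 1 / 2 : ℝ) : ℂ) =
        ((∫ x in (0 : ℝ)..1, x ^ (ν - 1 / 2) * (1 - x) ^ (ν - 1 / 2) : ℝ) : ℂ) := by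
      rw [Complex.betaIntegral, ← intervalIntegral.integral_ofReal]
      refine intervalIntegral.integral_congr fun x hx => ?_
      rw [uIcc_of_le zero_le_one] at hx
      rw [Complex.ofReal_mul, Complex.ofReal_cpow hx.1, Complex.ofReal_cpow (by linarith [hx.2])]
      push_cast
      congr 2 <;> ring
    rw [hb, this, Complex.ofReal_re]
  have hs : ∫ w in (-1 : ℝ)..1, (1 - w ^ 2) ^ (ν - 1 / 2) =
      2 * 4 ^ (ν - 1 / 2) * ProbabilityTheory.beta (ν + 1 / 2) (ν + 1 / 2) := by
    have h := intervalIntegral.integral_comp_mul_add (a := -1) (b := 1)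
      (fun x : ℝ => x ^ (ν - 1 / 2) * (1 - x) ^ (ν - 1 / 2))
      (show (1 / 2 : ℝ) ≠ 0 by norm_num) (1 / 2)
    norm_num at h
    rw [hb2, mul_comm (2 : ℝ), mul_assoc]
    rw [← h, ← intervalIntegral.integral_const_mul]
    refine intervalIntegral.integral_congr fun x hx => ?_
    rw [uIcc_of_le (by norm_num)] at hx
    obtain ⟨hx1, hx2⟩ := hx
    rw [← Real.mul_rpow (by linarith) (by linarith), ← Real.mul_rpow (by norm_num) (by nlinarith)]
    congr 1
    ring
  rw [hs, ProbabilityTheory.beta]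
  have hd := Real.Gamma_mul_Gamma_add_half (ν + 1 / 2)
  have hp : (4 : ℝ) ^ (ν - 1 / 2) = 2 ^ (2 * ν - 1) := by
    rw [show (4 : ℝ) = 2 ^ (2 : ℝ) by norm_num, ← Real.rpow_mul (by norm_num)]
    congr 1
    ring
  rw [hp]
  rw [show ν + 1 / 2 + 1 / 2 = ν + 1 by ring, show 1 - 2 * (ν + 1 / 2) = -(2 * ν - 1) - 1 by ring,
    Real.rpow_sub_one (by norm_num), Real.rpow_neg (by norm_num)] at hd
  rw [show ν + 1 / 2 + (ν + 1 / 2) = 2 * (ν + 1 / 2) by ring]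
  have g1 : 0 < Real.Gamma (2 * (ν + 1 / 2)) := Real.Gamma_pos_of_pos (by linarith)
  have g2 : 0 < Real.Gamma (ν + 1) := Real.Gamma_pos_of_pos (by linarith)
  have g3 : (0 : ℝ) < 2 ^ (2 * ν - 1) := by positivity
  rw [mul_div_assoc', div_eq_div_iff g1.ne' g2.ne']
  calc _ = 2 * 2 ^ (2 * ν - 1) * Real.Gamma (ν + 1 / 2) *
        (Real.Gamma (ν + 1 / 2) * Real.Gamma (ν + 1)) := by ring
    _ = _ := by
      rw [hd]
      field_simp

lemma intervalIntegrable_pow_mul_one_sub_sq_rpow {s : ℝ} (hs : -1 < s) (n : ℕ) :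
    IntervalIntegrable (fun w : ℝ => w ^ n * (1 - w ^ 2) ^ s) volume (-1) 1 :=
  (intervalIntegrable_one_sub_sq_rpow hs).continuousOn_mul (by fun_prop)

lemma integral_pow_mul_one_sub_sq_rpow_odd {s : ℝ} {n : ℕ} (hn : Odd n) :
    ∫ w in (-1 : ℝ)..1, w ^ n * (1 - w ^ 2) ^ s = 0 := by
  have h := intervalIntegral.integral_comp_neg (a := -1) (b := 1)
    (fun w : ℝ => w ^ n * (1 - w ^ 2) ^ s)
  simp only [hn.neg_pow, even_two.neg_pow, neg_mul, intervalIntegral.integral_neg, neg_neg] at h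
  linarith

lemma integral_pow_add_two_mul_one_sub_sq_rpow {ν : ℝ} (hν : -(1 / 2) < ν) (n : ℕ) :
    (n + 2 * ν + 2) * ∫ w in (-1 : ℝ)..1, w ^ (n + 2) * (1 - w ^ 2) ^ (ν - 1 / 2) =
      (n + 1) * ∫ w in (-1 : ℝ)..1, w ^ n * (1 - w ^ 2) ^ (ν - 1 / 2) := by
  have hi1 := (intervalIntegrable_pow_mul_one_sub_sq_rpow (s := ν - 1 / 2) (by linarith)
    n).const_mul (n + 1 : ℝ)
  have hi2 := (intervalIntegrable_pow_mul_one_sub_sq_rpow (s := ν - 1 / 2) (by linarith)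
    (n + 2)).const_mul (n + 2 * ν + 2)
  have h := intervalIntegral.integral_eq_sub_of_hasDerivAt_of_le (a := -1) (b := 1) (by norm_num)
    (f := fun w : ℝ => w ^ (n + 1) * (1 - w ^ 2) ^ (ν + 1 / 2))
    (f' := fun w => (n + 1) * (w ^ n * (1 - w ^ 2) ^ (ν - 1 / 2)) -
      (n + 2 * ν + 2) * (w ^ (n + 2) * (1 - w ^ 2) ^ (ν - 1 / 2)))
    (by
      refine ContinuousOn.mul (by fun_prop) (ContinuousOn.rpow_const (by fun_prop) ?_)
      exact fun x _ => Or.inr (by linarith))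
    (fun x hx => by
      have hx0 : 0 < 1 - x ^ 2 := by nlinarith [hx.1, hx.2]
      have := (hasDerivAt_pow (n + 1) x).mul
        (((hasDerivAt_pow 2 x).const_sub 1).rpow_const (p := ν + 1 / 2) (Or.inl hx0.ne'))
      convert! this using 1
      rw [show ν + 1 / 2 = ν - 1 / 2 + 1 by ring, Real.rpow_add_one hx0.ne',
        show ν - 1 / 2 + 1 - 1 = ν - 1 / 2 by ring]
      push_cast
      ring)
    (hi1.sub hi2)
  rw [intervalIntegral.integral_sub hi1 hi2, intervalIntegral.integral_const_mul,
    intervalIntegral.integral_const_mul] at h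
  have h0 : (0 : ℝ) ^ (ν + 1 / 2) = 0 := Real.zero_rpow (by linarith)
  norm_num at h
  norm_num at h0
  rw [h0] at h
  norm_num
  linarith

/-- The `n`-th moment of the symmetric probability density proportional to `(1 - u²) ^ (ν - 1/2)`. -/
noncomputable def symmJacobiMoment (ν : ℝ) (n : ℕ) : ℝ :=
  if Even n then (ascPochhammer ℝ (n / 2)).eval (1 / 2) / (ascPochhammer ℝ (n / 2)).eval (ν + 1)
  else 0

lemma symmJacobiMoment_two_mul (ν : ℝ) (n : ℕ) : symmJacobiMoment ν (2 * n) =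
    (ascPochhammer ℝ n).eval (1 / 2) / (ascPochhammer ℝ n).eval (ν + 1) := by
  simp [symmJacobiMoment]

lemma symmJacobiMoment_of_odd (ν : ℝ) {n : ℕ} (hn : Odd n) : symmJacobiMoment ν n = 0 := by
  simp [symmJacobiMoment, hn]

lemma symmJacobiMoment_nonneg {ν : ℝ} (hν : -1 < ν) (n : ℕ) : 0 ≤ symmJacobiMoment ν n := by
  unfold symmJacobiMoment
  split_ifs
  · exact div_nonneg (ascPochhammer_pos _ _ (by norm_num)).le
      (ascPochhammer_pos _ _ (by linarith)).le
  · rfl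

lemma integral_pow_mul_one_sub_sq_rpow {ν : ℝ} (hν : -(1 / 2) < ν) (n : ℕ) :
    Real.Gamma (ν + 1) / (√π * Real.Gamma (ν + 1 / 2)) *
      ∫ w in (-1 : ℝ)..1, w ^ n * (1 - w ^ 2) ^ (ν - 1 / 2) = symmJacobiMoment ν n := by
  rcases Nat.even_or_odd' n with ⟨k, rfl | rfl⟩
  · induction k with
    | zero =>
      have g1 : Real.Gamma (ν + 1 / 2) ≠ 0 := (Real.Gamma_pos_of_pos (by linarith)).ne'
      have g2 : Real.Gamma (ν + 1) ≠ 0 := (Real.Gamma_pos_of_pos (by linarith)).ne'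
      have g3 : √π ≠ 0 := by positivity
      simp only [mul_zero, pow_zero, one_mul, integral_one_sub_sq_rpow hν]
      simp only [symmJacobiMoment, Even.zero, if_true, Nat.zero_div, ascPochhammer_zero,
        Polynomial.eval_one]
      rw [← mul_div_mul_comm, mul_comm (Real.Gamma (ν + 1)), div_self (by positivity), div_one]
    | succ k ih =>
      have h := integral_pow_add_two_mul_one_sub_sq_rpow hν (2 * k)
      have g : (0 : ℝ) < k + ν + 1 := by have : (0 : ℝ) ≤ k := k.cast_nonneg; linarith
      have g1 : 0 < (ascPochhammer ℝ k).eval (ν + 1) := ascPochhammer_pos _ _ (by linarith)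
      rw [symmJacobiMoment_two_mul] at ih ⊢
      rw [ascPochhammer_succ_eval, ascPochhammer_succ_eval, mul_div_mul_comm, ← ih,
        show 2 * (k + 1) = 2 * k + 2 by ring]
      have g2 : ν + 1 + k ≠ 0 := by linarith
      rw [mul_comm _ ((1 / 2 + (k : ℝ)) / (ν + 1 + k)), mul_left_comm]
      congr 1
      rw [div_mul_eq_mul_div, eq_div_iff g2]
      push_cast at h
      linarith
  · rw [integral_pow_mul_one_sub_sq_rpow_odd (by simp), symmJacobiMoment_of_odd _ (by simp), mul_zero]

lemma integral_PiMeas_of_ne {ν : ℝ} (hν : -(1 / 2) < ν) (f : ℝ → ℝ) :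
    ∫ u, f u ∂(PiMeas ν) = Real.Gamma (ν + 1) / (√π * Real.Gamma (ν + 1 / 2)) *
      ∫ w in (-1 : ℝ)..1, f w * (1 - w ^ 2) ^ (ν - 1 / 2) := by
  have hK : 0 < Real.Gamma (ν + 1) / (√π * Real.Gamma (ν + 1 / 2)) := by
    have := Real.Gamma_pos_of_pos (show 0 < ν + 1 by linarith)
    have := Real.Gamma_pos_of_pos (show 0 < ν + 1 / 2 by linarith)
    positivity
  rw [PiMeas, if_neg hν.ne', integral_withDensity_eq_integral_toReal_smul (by fun_prop) (by simp),
    intervalIntegral.integral_of_le (by norm_num), ← integral_const_mul, integral_Icc_eq_integral_Ioc]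
  refine setIntegral_congr_fun measurableSet_Ioc fun x hx => ?_
  have : 0 ≤ (1 - x ^ 2) ^ (ν - 1 / 2) := Real.rpow_nonneg (by nlinarith [hx.1, hx.2]) _
  simp only [smul_eq_mul]
  rw [ENNReal.toReal_ofReal (by positivity)]
  ring

lemma integral_PiMeas_neg_half (f : ℝ → ℝ) :
    ∫ u, f u ∂(PiMeas (-(1 / 2))) = (f (-1) + f 1) / 2 := by
  rw [PiMeas, if_pos rfl, integral_smul_measure, integral_add_measure, integral_dirac,
    integral_dirac]
  · simp; ring
  · exact integrable_dirac (by simp)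
  · exact integrable_dirac (by simp)

lemma integral_pow_PiMeas {ν : ℝ} (hν : -(1 / 2) ≤ ν) (n : ℕ) :
    ∫ u, u ^ n ∂(PiMeas ν) = symmJacobiMoment ν n := by
  rcases hν.eq_or_lt with rfl | hν
  · rw [integral_PiMeas_neg_half]
    rcases Nat.even_or_odd' n with ⟨k, rfl | rfl⟩
    · have : (ascPochhammer ℝ k).eval (1 / 2) ≠ 0 := (ascPochhammer_pos _ _ (by norm_num)).ne'
      rw [symmJacobiMoment_two_mul, show (-(1 / 2) + 1 : ℝ) = 1 / 2 by norm_num, div_self this]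
      simp
    · rw [symmJacobiMoment_of_odd _ (by simp), Odd.neg_pow (by simp)]
      simp
  · rw [integral_PiMeas_of_ne hν, integral_pow_mul_one_sub_sq_rpow hν]

lemma isFiniteMeasure_PiMeas {ν : ℝ} (hν : -(1 / 2) ≤ ν) : IsFiniteMeasure (PiMeas ν) := by
  unfold PiMeas
  split_ifs with h
  · rw [h] at hν
    exact ⟨by simp⟩
  · have hν' : -(1 / 2) < ν := lt_of_le_of_ne hν (Ne.symm h)
    refine isFiniteMeasure_withDensity_ofReal (Integrable.const_mul ?_ _).hasFiniteIntegral
    have := intervalIntegrable_one_sub_sq_rpow (s := ν - 1 / 2) (by linarith)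
    rw [intervalIntegrable_iff_integrableOn_Icc_of_le (by norm_num)] at this
    exact this

lemma ae_PiMeas_mem_Icc (ν : ℝ) : ∀ᵐ u ∂(PiMeas ν), u ∈ Icc (-1 : ℝ) 1 := by
  unfold PiMeas
  split_ifs
  · refine Measure.ae_smul_measure ?_ _
    rw [ae_add_measure_iff]
    constructor <;> simp [ae_dirac_eq]
  · exact (withDensity_absolutelyContinuous _ _).ae_le (ae_restrict_mem measurableSet_Icc)

lemma PiFun_eq {β : ℝ} (hβ₁ : -1 < β) (hβ₂ : β < -(1 / 2)) {v : ℝ} (hv : v ∈ Ioo (-1 : ℝ) 1) :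
    PiFun β v = Real.Gamma (β + 1 + 1) / (√π * Real.Gamma (β + 1 + 1 / 2)) *
      ((∫ w in (0 : ℝ)..v, (1 - w ^ 2) ^ (β + 1 - 1 / 2)) -
        v * (1 - v ^ 2) ^ (β + 1 - 1 / 2) / (2 * (β + 1))) := by
  have hpos : ∀ w ∈ uIcc 0 v, 0 < 1 - w ^ 2 := fun w hw => by
    have := (convex_Ioo (-1 : ℝ) 1).ordConnected.uIcc_subset (by simp) hv hw
    nlinarith [this.1, this.2]
  have hint : ∀ s : ℝ, IntervalIntegrable (fun w : ℝ => (1 - w ^ 2) ^ s) volume 0 v := fun s =>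
    (ContinuousOn.rpow_const (by fun_prop) fun w hw => Or.inl (hpos w hw).ne').intervalIntegrable
  have h1 := (hint (β + 1 - 1 / 2)).const_mul (2 * (β + 1))
  have h2 := (hint (β - 1 / 2)).const_mul (2 * β + 1)
  have h := intervalIntegral.integral_eq_sub_of_hasDerivAt (a := 0) (b := v)
    (f := fun w : ℝ => w * (1 - w ^ 2) ^ (β + 1 - 1 / 2))
    (f' := fun w => 2 * (β + 1) * (1 - w ^ 2) ^ (β + 1 - 1 / 2) -
      (2 * β + 1) * (1 - w ^ 2) ^ (β - 1 / 2))
    (fun w hw => by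
      have := (hasDerivAt_id w).mul
        (((hasDerivAt_pow 2 w).const_sub 1).rpow_const (p := β + 1 - 1 / 2)
          (Or.inl (hpos w hw).ne'))
      convert! this using 1
      rw [show β + 1 - 1 / 2 = β - 1 / 2 + 1 by ring, Real.rpow_add_one (hpos w hw).ne',
        show β - 1 / 2 + 1 - 1 = β - 1 / 2 by ring]
      simp only [id]
      push_cast
      ring)
    (h1.sub h2)
  rw [intervalIntegral.integral_sub h1 h2, intervalIntegral.integral_const_mul,
    intervalIntegral.integral_const_mul] at h
  simp only [zero_mul, sub_zero] at h
  have g1 : Real.Gamma (β + 1 + 1) = (β + 1) * Real.Gamma (β + 1) :=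
    Real.Gamma_add_one (by linarith)
  have g2 : Real.Gamma (β + 1 + 1 / 2) = (β + 1 / 2) * Real.Gamma (β + 1 / 2) := by
    rw [← Real.Gamma_add_one (by linarith)]
    congr 1
    ring
  have g3 : Real.Gamma (β + 1 / 2) ≠ 0 := by
    have : 0 < Real.Gamma (β + 1 + 1 / 2) := Real.Gamma_pos_of_pos (by linarith)
    rw [g2] at this
    exact right_ne_zero_of_mul this.ne'
  have g4 : β + 1 ≠ 0 := by linarith
  have g5 : β + 1 / 2 ≠ 0 := by linarith
  have g6 : √π ≠ 0 := by positivity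
  rw [PiFun, g1, g2]
  generalize (∫ w in (0 : ℝ)..v, (1 - w ^ 2) ^ (β + 1 - 1 / 2)) = A at *
  generalize (∫ w in (0 : ℝ)..v, (1 - w ^ 2) ^ (β - 1 / 2)) = I at *
  rw [← h]
  generalize Real.Gamma (β + 1 / 2) = G at *
  have : I = (2 * (β + 1 / 2) * I) / (2 * (β + 1 / 2)) := by
    rw [mul_div_cancel_left₀ _ (by simpa using g5)]
  rw [this]
  rw [div_mul_eq_mul_div, div_mul_eq_mul_div, div_eq_div_iff (by positivity) (by positivity)]
  field_simp
  ring

lemma intervalIntegrable_PiFun_and_moment {β : ℝ} (hβ₁ : -1 < β) (hβ₂ : β < -(1 / 2)) :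
    IntegrableOn (PiFun β) (Ioo (-1) 1) ∧ ∀ n : ℕ,
      -(∫ v in Ioo (-1 : ℝ) 1, n * v ^ (n - 1) * PiFun β v) + (1 + (-1) ^ n) / 2 =
        symmJacobiMoment β n := by
  set K := Real.Gamma (β + 1 + 1) / (√π * Real.Gamma (β + 1 + 1 / 2)) with hK
  set g := β + 1 - 1 / 2 with hg
  set A : ℝ → ℝ := fun v => ∫ w in (0 : ℝ)..v, (1 - w ^ 2) ^ g with hA
  have hint : IntervalIntegrable (fun w : ℝ => (1 - w ^ 2) ^ g) volume (-1) 1 :=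
    intervalIntegrable_one_sub_sq_rpow (by linarith)
  have hAc : ContinuousOn A (uIcc (-1) 1) :=
    intervalIntegral.continuousOn_primitive_interval' hint (by simp [uIcc_of_le])
  have hAd : ∀ x ∈ Ioo (-1 : ℝ) 1, HasDerivAt A ((1 - x ^ 2) ^ g) x := fun x hx => by
    have hx0 : 1 - x ^ 2 ≠ 0 := by nlinarith [hx.1, hx.2]
    refine intervalIntegral.integral_hasDerivAt_right (hint.mono_set ?_) ?_ ?_
    · rw [uIcc_of_le (show (-1 : ℝ) ≤ 1 by norm_num)]
      exact (convex_Icc (-1 : ℝ) 1).ordConnected.uIcc_subset (by simp) ⟨hx.1.le, hx.2.le⟩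
    · exact Measurable.stronglyMeasurable (by fun_prop) |>.stronglyMeasurableAtFilter
    · exact ContinuousAt.rpow_const (by fun_prop) (Or.inl hx0)
  have hAi : ∀ f : ℝ → ℝ, Continuous f → IntervalIntegrable (fun v => f v * A v) volume (-1) 1 :=
    fun f hf => (hf.continuousOn.mul hAc).intervalIntegrable
  have hwi : ∀ n : ℕ, IntervalIntegrable (fun v => v ^ n * (1 - v ^ 2) ^ g) volume (-1) 1 :=
    intervalIntegrable_pow_mul_one_sub_sq_rpow (by linarith)
  have hPi : ∀ v ∈ Ioo (-1 : ℝ) 1, PiFun β v = K * (A v - v * (1 - v ^ 2) ^ g / (2 * (β + 1))) :=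
    fun v hv => PiFun_eq hβ₁ hβ₂ hv
  have hβ0 : β + 1 ≠ 0 := by linarith
  constructor
  · have := ((hAi (fun _ => 1) continuous_const).sub ((hwi 1).div_const (2 * (β + 1)))).const_mul K
    rw [intervalIntegrable_iff_integrableOn_Ioo_of_le (by norm_num)] at this
    refine this.congr_fun (fun v hv => ?_) measurableSet_Ioo
    simp only
    rw [hPi v hv, one_mul, pow_one]
  intro n
  have i1 : IntervalIntegrable (fun v => n * v ^ (n - 1) * A v) volume (-1) 1 :=
    hAi (fun v => n * v ^ (n - 1)) (by fun_prop)
  have hbp := intervalIntegral.integral_eq_sub_of_hasDerivAt_of_le (a := -1) (b := 1) (by norm_num)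
    (f := fun v => v ^ n * A v) (f' := fun v => n * v ^ (n - 1) * A v + v ^ n * (1 - v ^ 2) ^ g)
    (by
      rw [uIcc_of_le (by norm_num)] at hAc
      exact ContinuousOn.mul (by fun_prop) hAc)
    (fun x hx => (hasDerivAt_pow n x).mul (hAd x hx)) (i1.add (hwi n))
  rw [intervalIntegral.integral_add i1 (hwi n)] at hbp
  have hm : ∀ m, K * ∫ v in (-1 : ℝ)..1, v ^ m * (1 - v ^ 2) ^ g = symmJacobiMoment (β + 1) m :=
    integral_pow_mul_one_sub_sq_rpow (by linarith)
  have hodd : A (-1) = -A 1 := by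
    have := intervalIntegral.integral_comp_neg (a := 0) (b := 1) (fun w : ℝ => (1 - w ^ 2) ^ g)
    simp only [even_two.neg_pow, neg_zero] at this
    simp only [hA]
    rw [intervalIntegral.integral_symm, this]
  have hA1 : K * A 1 = 1 / 2 := by
    have h0 := hm 0
    simp only [pow_zero, one_mul] at h0
    have hsub : ∀ a b : ℝ, -1 ≤ a → a ≤ b → b ≤ 1 →
        IntervalIntegrable (fun w : ℝ => (1 - w ^ 2) ^ g) volume a b := fun a b ha hab hb => by
      refine hint.mono_set ?_
      rw [uIcc_of_le hab, uIcc_of_le (by norm_num)]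
      exact Icc_subset_Icc ha hb
    rw [← intervalIntegral.integral_add_adjacent_intervals
      (hsub (-1) 0 (by norm_num) (by norm_num) (by norm_num))
      (hsub 0 1 (by norm_num) (by norm_num) (by norm_num)), intervalIntegral.integral_symm] at h0
    change K * (-A (-1) + A 1) = _ at h0
    rw [hodd, neg_neg] at h0
    simp [symmJacobiMoment] at h0
    linarith
  have hI : ∫ v in Ioo (-1 : ℝ) 1, n * v ^ (n - 1) * PiFun β v =
      K * (∫ v in (-1 : ℝ)..1, n * v ^ (n - 1) * A v) -
        n / (2 * (β + 1)) * (K * ∫ v in (-1 : ℝ)..1, v ^ n * (1 - v ^ 2) ^ g) := by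
    rw [← mul_assoc, ← intervalIntegral.integral_const_mul, ← intervalIntegral.integral_const_mul,
      ← intervalIntegral.integral_sub (i1.const_mul _) ((hwi n).const_mul _),
      intervalIntegral.integral_of_le (by norm_num), integral_Ioc_eq_integral_Ioo]
    refine setIntegral_congr_fun measurableSet_Ioo fun v hv => ?_
    rw [hPi v hv]
    rcases n with _ | n
    · simp
    · rw [Nat.add_sub_cancel, pow_succ]
      field_simp
      ring
  have hM : symmJacobiMoment (β + 1) n * (1 + n / (2 * (β + 1))) = symmJacobiMoment β n := by
    rcases Nat.even_or_odd' n with ⟨k, rfl | rfl⟩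
    · rw [symmJacobiMoment_two_mul, symmJacobiMoment_two_mul]
      have p1 : 0 < (ascPochhammer ℝ k).eval (β + 1 + 1) := ascPochhammer_pos _ _ (by linarith)
      have p2 : 0 < (ascPochhammer ℝ k).eval (β + 1) := ascPochhammer_pos _ _ (by linarith)
      have h : (β + 1) * (ascPochhammer ℝ k).eval (β + 1 + 1) =
          (ascPochhammer ℝ k).eval (β + 1) * (β + 1 + k) := by
        rw [← ascPochhammer_succ_eval, ascPochhammer_succ_left]
        simp
      rw [div_mul_eq_mul_div, div_eq_div_iff p1.ne' p2.ne']
      push_cast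
      field_simp
      linear_combination -(ascPochhammer ℝ k).eval (1 / 2) * h
    · rw [symmJacobiMoment_of_odd _ (by simp), symmJacobiMoment_of_odd _ (by simp), zero_mul]
  simp only [one_pow, one_mul] at hbp
  rw [hodd] at hbp
  rw [hI, hm, ← hM, ← hm n]
  have := congrArg (K * ·) hbp
  simp only [mul_add, mul_sub] at this
  have h3 : K * ((-1) ^ n * -A 1) = -((-1) ^ n * (1 / 2)) := by rw [← hA1]; ring
  rw [hA1, h3] at this
  linear_combination (-1 : ℝ) * this

lemma add_pow_eq_sum_antidiagonal (x y : ℝ) (k : ℕ) : (x + y) ^ k =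
    ∑ p ∈ Finset.HasAntidiagonal.antidiagonal k, (k.choose p.1 : ℝ) * (x ^ p.1 * y ^ p.2) := by
  simp [(Commute.all x y).add_pow', nsmul_eq_mul]

lemma deriv_add_pow_eq_sum_antidiagonal (x Y v : ℝ) (k : ℕ) : k * (x + v * Y) ^ (k - 1) * Y =
    ∑ p ∈ Finset.HasAntidiagonal.antidiagonal k,
      (k.choose p.1 : ℝ) * (x ^ p.1 * (p.2 * v ^ (p.2 - 1) * Y ^ p.2)) := by
  have h1 : HasDerivAt (fun w => (x + w * Y) ^ k) (k * (x + v * Y) ^ (k - 1) * (1 * Y)) v :=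
    (((hasDerivAt_id v).mul_const Y).const_add x).pow k
  have h2 : HasDerivAt (fun w => (x + w * Y) ^ k) (∑ p ∈ Finset.HasAntidiagonal.antidiagonal k,
      (k.choose p.1 : ℝ) * (x ^ p.1 * (p.2 * v ^ (p.2 - 1) * Y ^ p.2))) v := by
    simp_rw [add_pow_eq_sum_antidiagonal, mul_pow]
    exact HasDerivAt.fun_sum fun p _ =>
      (((hasDerivAt_pow p.2 v).mul_const _).const_mul _).const_mul _
  rw [one_mul] at h1
  exact h1.unique h2

lemma integrable_PiMeas_of_continuous {ν : ℝ} (hν : -(1 / 2) ≤ ν) {f : ℝ → ℝ} (hf : Continuous f) :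
    Integrable f (PiMeas ν) := by
  have := isFiniteMeasure_PiMeas hν
  obtain ⟨C, hC⟩ := isCompact_Icc.exists_bound_of_continuousOn (s := Icc (-1 : ℝ) 1) hf.continuousOn
  refine Integrable.of_bound hf.aestronglyMeasurable C ?_
  filter_upwards [ae_PiMeas_mem_Icc ν] with u hu using hC u hu

lemma integral_sum_pow_PiMeas {ν : ℝ} (hν : -(1 / 2) ≤ ν) (X : ℝ) (k : ℕ) (c : ℕ × ℕ → ℝ) :
    ∫ u, (∑ p ∈ Finset.HasAntidiagonal.antidiagonal k, (k.choose p.1 : ℝ) * ((u * X) ^ p.1 * c p)) ∂(PiMeas ν) =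
      ∑ p ∈ Finset.HasAntidiagonal.antidiagonal k,
        (k.choose p.1 : ℝ) * (X ^ p.1 * symmJacobiMoment ν p.1 * c p) := by
  rw [integral_finsetSum _ fun p _ => integrable_PiMeas_of_continuous hν (by fun_prop)]
  refine Finset.sum_congr rfl fun p _ => ?_
  rw [integral_const_mul, integral_mul_const]
  simp_rw [mul_pow]
  rw [integral_mul_const, integral_pow_PiMeas hν, mul_comm (X ^ p.1)]

lemma hasSum_integral_of_weighted_bound {μ : Measure ℝ} {F : ℕ → ℝ → ℝ} {f h : ℝ → ℝ} {B : ℕ → ℝ}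
    (hB : Summable B) (hh : Integrable h μ) (hF : ∀ k, AEStronglyMeasurable (F k) μ)
    (hb : ∀ k, ∀ᵐ u ∂μ, |F k u| ≤ B k * h u) (hs : ∀ᵐ u ∂μ, HasSum (F · u) (f u)) :
    HasSum (fun k => ∫ u, F k u ∂μ) (∫ u, f u ∂μ) := by
  refine hasSum_integral_of_dominated_convergence (fun k u => B k * h u) hF hb ?_ ?_ hs
  · exact Filter.Eventually.of_forall fun u => hB.mul_right _
  · simp_rw [tsum_mul_right]
    exact hh.const_mul _

section

variable {α β a X Y : ℝ}

lemma abs_add_mul_le (hX : 0 ≤ X) (hY : 0 ≤ Y) {u v : ℝ} (hu : u ∈ Icc (-1 : ℝ) 1)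
    (hv : v ∈ Icc (-1 : ℝ) 1) : |u * X + v * Y| ≤ X + Y := by
  rw [abs_le]
  constructor <;> nlinarith [hu.1, hu.2, hv.1, hv.2]

lemma hasSum_integral_one_div_one_sub_rpow (hα : -(1 / 2) ≤ α) (ha : 0 < a) (hX : 0 ≤ X)
    (hY : 0 ≤ Y) (hXY : X + Y < 1) {v : ℝ} (hv : v ∈ Icc (-1 : ℝ) 1) :
    HasSum (fun k : ℕ => (ascPochhammer ℝ k).eval a / k.factorial *
        ∑ p ∈ Finset.HasAntidiagonal.antidiagonal k,
          (k.choose p.1 : ℝ) * (X ^ p.1 * symmJacobiMoment α p.1 * (v * Y) ^ p.2))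
      (∫ u, 1 / (1 - (u * X + v * Y)) ^ a ∂(PiMeas α)) := by
  have := isFiniteMeasure_PiMeas hα
  have hr : |X + Y| < 1 := by rwa [abs_of_nonneg (by positivity)]
  have key := hasSum_integral_of_weighted_bound (μ := PiMeas α) (h := fun _ => 1)
    (F := fun k u => (ascPochhammer ℝ k).eval a / k.factorial * (u * X + v * Y) ^ k)
    (f := fun u => 1 / (1 - (u * X + v * Y)) ^ a)
    (hasSum_one_div_one_sub_rpow a hr).summable (integrable_const _)
    (fun k => Continuous.aestronglyMeasurable (by fun_prop))
    (fun k => by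
      filter_upwards [ae_PiMeas_mem_Icc α] with u hu
      have h0 : 0 ≤ (ascPochhammer ℝ k).eval a / k.factorial :=
        div_nonneg (ascPochhammer_pos _ _ ha).le (by positivity)
      rw [abs_mul, abs_of_nonneg h0, abs_pow, mul_one]
      gcongr
      exact abs_add_mul_le hX hY hu hv)
    (by
      filter_upwards [ae_PiMeas_mem_Icc α] with u hu
      exact hasSum_one_div_one_sub_rpow a ((abs_add_mul_le hX hY hu hv).trans_lt hXY))
  convert! key using 1
  funext k
  rw [integral_const_mul]
  simp_rw [add_pow_eq_sum_antidiagonal]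
  rw [integral_sum_pow_PiMeas hα]

lemma integral_deriv_term (hα : -(1 / 2) ≤ α) (v : ℝ) (k : ℕ) :
    ∫ u, k * (u * X + v * Y) ^ (k - 1) * Y ∂(PiMeas α) = ∑ p ∈ Finset.HasAntidiagonal.antidiagonal k,
      (k.choose p.1 : ℝ) *
        (X ^ p.1 * symmJacobiMoment α p.1 * (p.2 * v ^ (p.2 - 1) * Y ^ p.2)) := by
  simp_rw [deriv_add_pow_eq_sum_antidiagonal]
  rw [integral_sum_pow_PiMeas hα X k (fun p => p.2 * v ^ (p.2 - 1) * Y ^ p.2)]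

lemma abs_deriv_term_le (ha : 0 < a) (hX : 0 ≤ X) (hY : 0 ≤ Y) {u v : ℝ}
    (hu : u ∈ Icc (-1 : ℝ) 1) (hv : v ∈ Icc (-1 : ℝ) 1) (k : ℕ) :
    |(ascPochhammer ℝ k).eval a / k.factorial * (k * (u * X + v * Y) ^ (k - 1) * Y)| ≤
      (ascPochhammer ℝ k).eval a / k.factorial * (k * (X + Y) ^ (k - 1)) * Y := by
  have h0 : 0 ≤ (ascPochhammer ℝ k).eval a / k.factorial :=
    div_nonneg (ascPochhammer_pos _ _ ha).le (by positivity)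
  rw [abs_mul, abs_of_nonneg h0, abs_mul, abs_mul, abs_pow, abs_of_nonneg hY,
    abs_of_nonneg k.cast_nonneg, ← mul_assoc]
  have := abs_add_mul_le hX hY hu hv
  gcongr

lemma hasSum_integral_deriv (hα : -(1 / 2) ≤ α) (ha : 0 < a) (hX : 0 ≤ X)
    (hY : 0 ≤ Y) (hXY : X + Y < 1) {v : ℝ} (hv : v ∈ Icc (-1 : ℝ) 1) :
    HasSum (fun k : ℕ =>
        ∫ u, (ascPochhammer ℝ k).eval a / k.factorial * (k * (u * X + v * Y) ^ (k - 1) * Y)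
          ∂(PiMeas α))
      (∫ u, a / (1 - (u * X + v * Y)) ^ (a + 1) * Y ∂(PiMeas α)) := by
  have := isFiniteMeasure_PiMeas hα
  have hr : |X + Y| < 1 := by rwa [abs_of_nonneg (by positivity)]
  refine hasSum_integral_of_weighted_bound (h := fun _ => 1)
    ((hasSum_deriv_one_div_one_sub_rpow a hr).summable.mul_right Y) (integrable_const _)
    (fun k => Continuous.aestronglyMeasurable (by fun_prop)) (fun k => ?_) ?_
  · filter_upwards [ae_PiMeas_mem_Icc α] with u hu
    rw [mul_one]
    exact abs_deriv_term_le ha hX hY hu hv k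
  · filter_upwards [ae_PiMeas_mem_Icc α] with u hu
    convert! (hasSum_deriv_one_div_one_sub_rpow a
      ((abs_add_mul_le hX hY hu hv).trans_lt hXY)).mul_right Y using 2
    ring

lemma hasSum_integral_deriv_mul_PiFun (hβ₁ : -1 < β) (hβ₂ : β < -(1 / 2)) (hα : -(1 / 2) ≤ α)
    (ha : 0 < a) (hX : 0 ≤ X) (hY : 0 ≤ Y) (hXY : X + Y < 1) :
    HasSum (fun k : ℕ => (ascPochhammer ℝ k).eval a / k.factorial *
        ∑ p ∈ Finset.HasAntidiagonal.antidiagonal k, (k.choose p.1 : ℝ) *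
          (X ^ p.1 * symmJacobiMoment α p.1 * Y ^ p.2 *
            ∫ v in Ioo (-1 : ℝ) 1, p.2 * v ^ (p.2 - 1) * PiFun β v))
      (∫ v in Ioo (-1 : ℝ) 1,
        (∫ u, a / (1 - (u * X + v * Y)) ^ (a + 1) * Y ∂(PiMeas α)) * PiFun β v) := by
  have := isFiniteMeasure_PiMeas hα
  have hr : |X + Y| < 1 := by rwa [abs_of_nonneg (by positivity)]
  have hPi := (intervalIntegrable_PiFun_and_moment hβ₁ hβ₂).1
  have hterm : ∀ (k : ℕ) (v : ℝ), (∫ u, (ascPochhammer ℝ k).eval a / k.factorial *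
      (k * (u * X + v * Y) ^ (k - 1) * Y) ∂(PiMeas α)) =
      (ascPochhammer ℝ k).eval a / k.factorial * ∑ p ∈ Finset.HasAntidiagonal.antidiagonal k,
      (k.choose p.1 : ℝ) *
        (X ^ p.1 * symmJacobiMoment α p.1 * (p.2 * v ^ (p.2 - 1) * Y ^ p.2)) := fun k v => by
    rw [integral_const_mul, integral_deriv_term hα]
  have key := hasSum_integral_of_weighted_bound (μ := volume.restrict (Ioo (-1 : ℝ) 1))
    (h := fun v => |PiFun β v|)
    (F := fun k v => (∫ u, (ascPochhammer ℝ k).eval a / k.factorial *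
      (k * (u * X + v * Y) ^ (k - 1) * Y) ∂(PiMeas α)) * PiFun β v)
    (f := fun v => (∫ u, a / (1 - (u * X + v * Y)) ^ (a + 1) * Y ∂(PiMeas α)) * PiFun β v)
    (((hasSum_deriv_one_div_one_sub_rpow a hr).summable.mul_right Y).mul_right
      ((PiMeas α).real univ))
    hPi.abs
    (fun k => by
      simp_rw [hterm]
      exact (Continuous.aestronglyMeasurable (by fun_prop)).mul hPi.aestronglyMeasurable)
    (fun k => by
      filter_upwards [ae_restrict_mem measurableSet_Ioo] with v hv
      rw [abs_mul]
      gcongr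
      rw [← Real.norm_eq_abs]
      refine norm_integral_le_of_norm_le_const (μ := PiMeas α) ?_
      filter_upwards [ae_PiMeas_mem_Icc α] with u hu
      exact abs_deriv_term_le ha hX hY hu (Ioo_subset_Icc_self hv) k)
    (by
      filter_upwards [ae_restrict_mem measurableSet_Ioo] with v hv
      exact (hasSum_integral_deriv hα ha hX hY hXY (Ioo_subset_Icc_self hv)).mul_right _)
  convert! key using 1
  funext k
  simp_rw [hterm, mul_assoc, Finset.sum_mul]
  rw [integral_const_mul, integral_finsetSum]
  · congr 1
    refine Finset.sum_congr rfl fun p _ => ?_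
    simp_rw [← integral_const_mul]
    refine integral_congr_ae (Filter.Eventually.of_forall fun v => ?_)
    ring
  · intro p _
    have hc : Continuous fun v : ℝ => (k.choose p.1 : ℝ) *
        (X ^ p.1 * symmJacobiMoment α p.1 * (p.2 * v ^ (p.2 - 1) * Y ^ p.2)) := by fun_prop
    obtain ⟨C, hC⟩ := isCompact_Icc.exists_bound_of_continuousOn (s := Icc (-1 : ℝ) 1)
      hc.continuousOn
    have := hPi.bdd_mul (c := C) hc.aestronglyMeasurable (by
      filter_upwards [ae_restrict_mem measurableSet_Ioo] with v hv
      exact hC v (Ioo_subset_Icc_self hv))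
    simpa only [mul_assoc] using this

lemma hasSum_moment_antidiagonal (hβ₁ : -1 < β) (hβ₂ : β < -(1 / 2)) (hα : -(1 / 2) ≤ α)
    (ha : 0 < a) (hX : 0 ≤ X) (hY : 0 ≤ Y) (hXY : X + Y < 1) :
    HasSum (fun k : ℕ => (ascPochhammer ℝ k).eval a / k.factorial *
        ∑ p ∈ Finset.HasAntidiagonal.antidiagonal k, (k.choose p.1 : ℝ) *
          (X ^ p.1 * symmJacobiMoment α p.1 * (Y ^ p.2 * symmJacobiMoment β p.2)))
      (-(∫ v in Ioo (-1 : ℝ) 1,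
        (∫ u, a / (1 - (u * X + v * Y)) ^ (a + 1) * Y ∂(PiMeas α)) * PiFun β v) +
        ((∫ u, 1 / (1 - (u * X + (-1) * Y)) ^ a ∂(PiMeas α)) +
          (∫ u, 1 / (1 - (u * X + 1 * Y)) ^ a ∂(PiMeas α))) / 2) := by
  have h1 := hasSum_integral_deriv_mul_PiFun hβ₁ hβ₂ hα ha hX hY hXY
  have h2 := hasSum_integral_one_div_one_sub_rpow hα ha hX hY hXY (v := -1) (by simp)
  have h3 := hasSum_integral_one_div_one_sub_rpow hα ha hX hY hXY (v := 1) (by simp)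
  convert! h1.neg.add ((h2.add h3).div_const 2) using 1
  funext k
  rw [← mul_add, mul_div_assoc, ← mul_neg, ← mul_add, ← Finset.sum_add_distrib, Finset.sum_div,
    ← Finset.sum_neg_distrib, ← Finset.sum_add_distrib]
  congr 1
  refine Finset.sum_congr rfl fun p _ => ?_
  rw [← (intervalIntegrable_PiFun_and_moment hβ₁ hβ₂).2 p.2, mul_pow, mul_pow, one_pow]
  ring

lemma hasSum_F4 (hα : -1 < α) (hβ : -1 < β) (ha : 0 < a) (hX : 0 ≤ X) (hY : 0 ≤ Y) {R : ℝ}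
    (h : HasSum (fun k : ℕ => (ascPochhammer ℝ k).eval a / k.factorial *
        ∑ p ∈ Finset.HasAntidiagonal.antidiagonal k, (k.choose p.1 : ℝ) *
          (X ^ p.1 * symmJacobiMoment α p.1 * (Y ^ p.2 * symmJacobiMoment β p.2))) R) :
    F4 (a / 2) ((a + 1) / 2) (α + 1) (β + 1) (X ^ 2) (Y ^ 2) = R := by
  set T : ℕ × ℕ → ℝ := fun p => (ascPochhammer ℝ (p.1 + p.2)).eval a /
    (p.1.factorial * p.2.factorial) *
      (X ^ p.1 * symmJacobiMoment α p.1 * (Y ^ p.2 * symmJacobiMoment β p.2)) with hT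
  have hT0 : ∀ p, 0 ≤ T p := fun p => by
    have := symmJacobiMoment_nonneg hα p.1
    have := symmJacobiMoment_nonneg hβ p.2
    have := ascPochhammer_pos (p.1 + p.2) a ha
    positivity
  have hanti : ∀ k : ℕ, HasSum (fun p : Finset.HasAntidiagonal.antidiagonal k => T p)
      ((ascPochhammer ℝ k).eval a / k.factorial *
        ∑ p ∈ Finset.HasAntidiagonal.antidiagonal k, (k.choose p.1 : ℝ) *
          (X ^ p.1 * symmJacobiMoment α p.1 * (Y ^ p.2 * symmJacobiMoment β p.2))) := fun k => by
    convert! Finset.hasSum (Finset.HasAntidiagonal.antidiagonal k) T using 1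
    rw [Finset.mul_sum]
    refine Finset.sum_congr rfl fun p hp => ?_
    rw [Finset.HasAntidiagonal.mem_antidiagonal] at hp
    subst hp
    rw [Nat.choose_symm_add, Nat.add_choose, Nat.cast_div (Nat.factorial_mul_factorial_dvd_factorial_add _ _)
      (by positivity)]
    have : ((p.1 + p.2).factorial : ℝ) ≠ 0 := by positivity
    simp only [hT]
    push_cast
    field_simp
  have hsum : Summable (fun s : Σ k : ℕ, Finset.HasAntidiagonal.antidiagonal k => T s.2) := by
    rw [summable_sigma_of_nonneg fun _ => hT0 _]
    refine ⟨fun k => (hanti k).summable, ?_⟩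
    simp_rw [fun k => (hanti k).tsum_eq]
    exact h.summable
  have hTR : HasSum T R := by
    rw [← Finset.HasAntidiagonal.sigmaAntidiagonalEquivProd.hasSum_iff]
    have h2 := hsum.hasSum
    have h3 := h2.sigma hanti
    rw [h3.unique h] at h2
    exact h2
  have hinj : Function.Injective (fun p : ℕ × ℕ => (2 * p.1, 2 * p.2)) := fun p q hpq => by
    simp only [Prod.mk.injEq] at hpq
    ext <;> omega
  have hTe := (hinj.hasSum_iff (f := T) (a := R) (fun p hp => by
    by_cases h1 : Even p.1
    · by_cases h2 : Even p.2
      · exact absurd ⟨(p.1 / 2, p.2 / 2), Prod.ext (Nat.two_mul_div_two_of_even h1)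
          (Nat.two_mul_div_two_of_even h2)⟩ hp
      · simp [hT, symmJacobiMoment_of_odd β (Nat.not_even_iff_odd.1 h2)]
    · simp [hT, symmJacobiMoment_of_odd α (Nat.not_even_iff_odd.1 h1)])).2 hTR
  rw [F4, ← hTe.tsum_eq]
  refine tsum_congr fun p => ?_
  simp only [hT, Function.comp, symmJacobiMoment_two_mul, factorial_two_mul_eq]
  rw [← mul_add, ascPochhammer_eval_two_mul, pow_add]
  have q1 : ∀ k, (ascPochhammer ℝ k).eval (1 / 2 : ℝ) ≠ 0 := fun k =>
    (ascPochhammer_pos _ _ (by norm_num)).ne'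
  have q2 : (ascPochhammer ℝ p.1).eval (α + 1) ≠ 0 := (ascPochhammer_pos _ _ (by linarith)).ne'
  have q3 : (ascPochhammer ℝ p.2).eval (β + 1) ≠ 0 := (ascPochhammer_pos _ _ (by linarith)).ne'
  have q4 := q1 p.1
  have q5 := q1 p.2
  rw [pow_mul, pow_mul]
  generalize (ascPochhammer ℝ p.1).eval (1 / 2 : ℝ) = z1 at *
  generalize (ascPochhammer ℝ p.2).eval (1 / 2 : ℝ) = z2 at *
  field_simp

end

lemma Psi_eq {c : ℝ} {α β t θ φ u v X Y : ℝ} (hc : 0 < c) (hct : Real.cosh (t / 2) = c)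
    (hX : Real.sin (θ / 2) * Real.sin (φ / 2) / c = X)
    (hY : Real.cos (θ / 2) * Real.cos (φ / 2) / c = Y) (h : 0 < 1 - (u * X + v * Y)) :
    Psi α β t θ φ u v = cab α β * Real.sinh (t / 2) / c ^ (α + β + 2) *
      (1 / (1 - (u * X + v * Y)) ^ (α + β + 2)) := by
  have hq : Real.cosh (t / 2) - 1 + qf θ φ u v = c * (1 - (u * X + v * Y)) := by
    rw [qf, hct, ← hX, ← hY]
    field_simp
    ring
  rw [Psi, hq, Real.mul_rpow hc.le h.le]
  field_simp

lemma deriv_Psi {c : ℝ} {α β t θ φ u v X Y : ℝ} (hc : 0 < c) (hct : Real.cosh (t / 2) = c)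
    (hX : Real.sin (θ / 2) * Real.sin (φ / 2) / c = X)
    (hY : Real.cos (θ / 2) * Real.cos (φ / 2) / c = Y) (h : 0 < 1 - (u * X + v * Y)) :
    deriv (fun v' => Psi α β t θ φ u v') v = cab α β * Real.sinh (t / 2) / c ^ (α + β + 2) *
      ((α + β + 2) / (1 - (u * X + v * Y)) ^ (α + β + 2 + 1) * Y) := by
  have hev : (fun v' => Psi α β t θ φ u v') =ᶠ[nhds v]
      fun v' => cab α β * Real.sinh (t / 2) / c ^ (α + β + 2) *
        (1 - (u * X + v' * Y)) ^ (-(α + β + 2)) := by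
    have hcont : Continuous fun v' : ℝ => 1 - (u * X + v' * Y) := by fun_prop
    filter_upwards [hcont.continuousAt.eventually (lt_mem_nhds h)] with v' hv'
    rw [Psi_eq hc hct hX hY hv', Real.rpow_neg hv'.le, one_div]
  rw [hev.deriv_eq]
  have hd : HasDerivAt (fun v' : ℝ => 1 - (u * X + v' * Y)) (-(1 * Y)) v :=
    (((hasDerivAt_id v).mul_const Y).const_add (u * X)).const_sub 1
  rw [((hd.rpow_const (p := -(α + β + 2)) (Or.inl h.ne')).const_mul _).deriv,
    show -(α + β + 2) - 1 = -(α + β + 2 + 1) by ring, Real.rpow_neg h.le]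
  ring

theorem jacobi_poisson_representation_low_beta (α β : ℝ)
    (hβ₁ : -1 < β) (hβ₂ : β < -(1/2)) (hα : -(1/2) ≤ α)
    (t : ℝ) (ht : 0 < t) (θ φ : ℝ) (hθ : θ ∈ Icc (0 : ℝ) π) (hφ : φ ∈ Icc (0 : ℝ) π) :
    Hker α β t θ φ =
      (∫ v in Ioo (-1 : ℝ) 1,
          (∫ u, (-(deriv (fun v' => Psi α β t θ φ u v') v)) ∂(PiMeas α)) * PiFun β v)
      + ∫ v, (∫ u, Psi α β t θ φ u v ∂(PiMeas α)) ∂(PiMeas (-(1/2))) := by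
  obtain ⟨c, hct⟩ : ∃ c, Real.cosh (t / 2) = c := ⟨_, rfl⟩
  obtain ⟨X, hX⟩ : ∃ X, Real.sin (θ / 2) * Real.sin (φ / 2) / c = X := ⟨_, rfl⟩
  obtain ⟨Y, hY⟩ : ∃ Y, Real.cos (θ / 2) * Real.cos (φ / 2) / c = Y := ⟨_, rfl⟩
  have hc1 : 1 < c := hct ▸ Real.one_lt_cosh.2 (by positivity)
  have hc : 0 < c := by linarith
  have hs : ∀ x ∈ Icc (0 : ℝ) π, 0 ≤ Real.sin (x / 2) := fun x hx =>
    Real.sin_nonneg_of_nonneg_of_le_pi (by linarith [hx.1]) (by linarith [hx.2, Real.pi_pos])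
  have hcs : ∀ x ∈ Icc (0 : ℝ) π, 0 ≤ Real.cos (x / 2) := fun x hx =>
    Real.cos_nonneg_of_neg_pi_div_two_le_of_le (by linarith [hx.1, Real.pi_pos])
      (by linarith [hx.2])
  have hX0 : 0 ≤ X := hX ▸ div_nonneg (mul_nonneg (hs θ hθ) (hs φ hφ)) hc.le
  have hY0 : 0 ≤ Y := hY ▸ div_nonneg (mul_nonneg (hcs θ hθ) (hcs φ hφ)) hc.le
  have hXY : X + Y < 1 := by
    rw [← hX, ← hY, ← add_div, div_lt_one hc, add_comm, ← Real.cos_sub]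
    exact (Real.cos_le_one _).trans_lt hc1
  have ha : 0 < α + β + 2 := by linarith
  have hpos : ∀ u ∈ Icc (-1 : ℝ) 1, ∀ v ∈ Icc (-1 : ℝ) 1, 0 < 1 - (u * X + v * Y) :=
    fun u hu v hv => by linarith [le_abs_self (u * X + v * Y), abs_add_mul_le hX0 hY0 hu hv]
  have hF4 := hasSum_F4 (by linarith) hβ₁ ha hX0 hY0
    (hasSum_moment_antidiagonal hβ₁ hβ₂ hα ha hX0 hY0 hXY)
  rw [show α + β + 2 + 1 = α + β + 3 by ring] at hF4
  rw [Hker, hct, hX, hY, hF4, integral_PiMeas_neg_half]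
  have hPsi : ∀ v ∈ Icc (-1 : ℝ) 1, ∫ u, Psi α β t θ φ u v ∂(PiMeas α) =
      cab α β * Real.sinh (t / 2) / c ^ (α + β + 2) *
        ∫ u, 1 / (1 - (u * X + v * Y)) ^ (α + β + 2) ∂(PiMeas α) := fun v hv => by
    rw [← integral_const_mul]
    refine integral_congr_ae ?_
    filter_upwards [ae_PiMeas_mem_Icc α] with u hu using Psi_eq hc hct hX hY (hpos u hu v hv)
  have hderiv : ∫ v in Ioo (-1 : ℝ) 1,
      (∫ u, (-(deriv (fun v' => Psi α β t θ φ u v') v)) ∂(PiMeas α)) * PiFun β v =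
      cab α β * Real.sinh (t / 2) / c ^ (α + β + 2) * -∫ v in Ioo (-1 : ℝ) 1,
        (∫ u, (α + β + 2) / (1 - (u * X + v * Y)) ^ (α + β + 3) * Y ∂(PiMeas α)) * PiFun β v := by
    rw [← integral_neg, ← integral_const_mul]
    refine setIntegral_congr_fun measurableSet_Ioo fun v hv => ?_
    rw [integral_neg, ← neg_mul, ← mul_assoc, mul_neg, ← integral_const_mul]
    congr 2
    refine integral_congr_ae ?_
    filter_upwards [ae_PiMeas_mem_Icc α] with u hu
    rw [deriv_Psi hc hct hX hY (hpos u hu v (Ioo_subset_Icc_self hv)),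
      show α + β + 2 + 1 = α + β + 3 by ring]
  rw [hderiv, hPsi (-1) (by simp), hPsi 1 (by simp)]
  ring
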